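/- For any set E and any irreflexive symmetric relation I ⊆ E × E, the free partially commutative monoid M(E,I) is cancellative: for all x, y, z ∈ M(E,I), xz = yz implies x = y, and zx = zy implies x = y. -/

import Mathlib

open CategoryTheory

/-- The elementary commutation relation. -/
def traceRel (E : Type u) (I : E → E → Prop) : FreeMonoid E → FreeMonoid E → Prop :=
  fun x y => ∃ a b, I a b ∧ x = FreeMonoid.of a * FreeMonoid.of b ∧
    y = FreeMonoid.of b * FreeMonoid.of a

/-- The congruence generated by the commutation relations. -/
def traceCon (E : Type u) (I : E → E → Prop) : Con (FreeMonoid E) := conGen (traceRel E I)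

/-- The free partially commutative (trace) monoid `M(E,I)`. -/
def TraceMonoid (E : Type u) (I : E → E → Prop) : Type u := (traceCon E I).Quotient

instance (E : Type u) (I : E → E → Prop) : Monoid (TraceMonoid E I) :=
  Con.monoid (traceCon E I)

/-- The canonical generator map `E → M(E,I)`. -/
def TraceMonoid.of (E : Type u) (I : E → E → Prop) (a : E) : TraceMonoid E I :=
  (traceCon E I).mk' (FreeMonoid.of a)

/-- The clique number of the independence graph `(E, I)`:  the supremum of the
cardinalities of finite sets of pairwise `I`-related (distinct) elements. -/
noncomputable def cliqueNumber (E : Type u) (I : E → E → Prop) : ℕ∞ :=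
  ⨆ (s : {s : Finset E // ∀ a ∈ s, ∀ b ∈ s, a ≠ b → I a b}), (s.1.card : ℕ∞)

open Classical in
/-- Erase the first occurrence of a letter. -/
noncomputable def traceErase {E : Type u} (a : E) (x : FreeMonoid E) : FreeMonoid E :=
  FreeMonoid.ofList (x.toList.erase a)

theorem traceCon_perm_erase {E : Type u} {I : E → E → Prop} (hirr : ∀ a, ¬ I a a)
    {x y : FreeMonoid E} (h : traceCon E I x y) :
    x.toList.Perm y.toList ∧ ∀ a, traceCon E I (traceErase a x) (traceErase a y) := by
  classical
  change ConGen.Rel (traceRel E I) x y at h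
  induction h with
  | of x y h =>
    have h0 := h
    obtain ⟨b, c, hbc, rfl, rfl⟩ := h
    refine ⟨List.Perm.swap _ _ _, fun a => ?_⟩
    have hne : b ≠ c := fun e => hirr c (e ▸ hbc)
    by_cases h1 : b = a
    · subst h1
      have : traceErase b (FreeMonoid.of b * FreeMonoid.of c)
          = traceErase b (FreeMonoid.of c * FreeMonoid.of b) := by
        simp [traceErase, hne.symm]
      rw [this]
      exact (traceCon E I).refl _
    · by_cases h2 : c = a
      · subst h2
        have : traceErase c (FreeMonoid.of b * FreeMonoid.of c)
            = traceErase c (FreeMonoid.of c * FreeMonoid.of b) := by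
          simp [traceErase, hne]
        rw [this]
        exact (traceCon E I).refl _
      · have e1 : traceErase a (FreeMonoid.of b * FreeMonoid.of c)
            = FreeMonoid.of b * FreeMonoid.of c := by
          simp [traceErase, h1, h2]
        have e2 : traceErase a (FreeMonoid.of c * FreeMonoid.of b)
            = FreeMonoid.of c * FreeMonoid.of b := by
          simp [traceErase, h1, h2]
        rw [e1, e2]
        exact ConGen.Rel.of _ _ h0
  | refl x => exact ⟨List.Perm.refl _, fun a => (traceCon E I).refl _⟩
  | symm _ ih => exact ⟨ih.1.symm, fun a => (traceCon E I).symm (ih.2 a)⟩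
  | trans _ _ ih1 ih2 =>
    exact ⟨ih1.1.trans ih2.1, fun a => (traceCon E I).trans (ih1.2 a) (ih2.2 a)⟩
  | @mul w x y z h1 h2 ih1 ih2 =>
    refine ⟨by simpa using ih1.1.append ih2.1, fun a => ?_⟩
    have key : ∀ u v : FreeMonoid E, traceErase a (u * v) =
        if a ∈ u.toList then traceErase a u * v else u * traceErase a v := by
      intro u v
      simp only [traceErase, FreeMonoid.toList_mul, List.erase_append]
      split_ifs <;> rfl
    rw [key, key]
    by_cases hm : a ∈ w.toList
    · rw [if_pos hm, if_pos (ih1.1.mem_iff.1 hm)]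
      exact (traceCon E I).mul (ih1.2 a) h2
    · rw [if_neg hm, if_neg (fun h => hm (ih1.1.mem_iff.2 h))]
      exact (traceCon E I).mul h1 (ih2.2 a)

theorem traceCon_reverse {E : Type u} {I : E → E → Prop} (hsym : ∀ a b, I a b → I b a)
    {x y : FreeMonoid E} (h : traceCon E I x y) :
    traceCon E I x.reverse y.reverse := by
  change ConGen.Rel (traceRel E I) x y at h
  induction h with
  | of x y h =>
    obtain ⟨b, c, hbc, rfl, rfl⟩ := h
    exact ConGen.Rel.of _ _ ⟨c, b, hsym _ _ hbc, rfl, rfl⟩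
  | refl x => exact (traceCon E I).refl _
  | symm _ ih => exact (traceCon E I).symm ih
  | trans _ _ ih1 ih2 => exact (traceCon E I).trans ih1 ih2
  | mul _ _ ih1 ih2 =>
    rw [FreeMonoid.reverse_mul, FreeMonoid.reverse_mul]
    exact (traceCon E I).mul ih2 ih1

theorem traceCon_left_cancel {E : Type u} {I : E → E → Prop} (hirr : ∀ a, ¬ I a a)
    (z x y : FreeMonoid E) (h : traceCon E I (z * x) (z * y)) : traceCon E I x y := by
  classical
  induction z using FreeMonoid.inductionOn' with
  | one => simpa using h
  | of_mul a z ih =>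
    apply ih
    have := (traceCon_perm_erase hirr h).2 a
    simpa [traceErase, mul_assoc] using this

theorem trace_cancellative (E : Type u) (I : E → E → Prop)
    (_hirr : ∀ a, ¬ I a a) (_hsym : ∀ a b, I a b → I b a) :
    (∀ x y z : TraceMonoid E I, x * z = y * z → x = y) ∧
    (∀ x y z : TraceMonoid E I, z * x = z * y → x = y) := by
  have left : ∀ x y z : FreeMonoid E,
      traceCon E I (z * x) (z * y) → traceCon E I x y :=
    fun x y z => traceCon_left_cancel _hirr z x y
  constructor
  · intro x y z h
    induction x using Con.induction_on with | _ x
    induction y using Con.induction_on with | _ y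
    induction z using Con.induction_on with | _ z
    have h' : traceCon E I (x * z) (y * z) := (Con.eq _).1 h
    refine (Con.eq _).2 ?_
    have h2 := traceCon_reverse _hsym h'
    rw [FreeMonoid.reverse_mul, FreeMonoid.reverse_mul] at h2
    simpa using traceCon_reverse _hsym (left _ _ _ h2)
  · intro x y z h
    induction x using Con.induction_on with | _ x
    induction y using Con.induction_on with | _ y
    induction z using Con.induction_on with | _ z
    have h' : traceCon E I (z * x) (z * y) := (Con.eq _).1 h
    exact (Con.eq _).2 (left _ _ _ h')
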